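/- Let k=(k_1,…,k_r) be a composition, let m be a positive integer, and let α∈ℂ∖ℕ with ℜ(α)<1. Then ∫_0^1 Li_k(x)·log^m(1−x)/(x(1−x)^α) dx = (−1)^m·(d^m/dα^m) ζ((←k^∨)_+; 1−α), the m-th derivative of the function α ↦ ζ((←k^∨)_+; 1−α). -/

import Mathlib

open scoped BigOperators
open MeasureTheory

/-- Multiple polylogarithm `Li_k(z) = Σ_{n₁>⋯>n_r>0} z^{n₁}/(n₁^{k₁}⋯n_r^{k_r})`. -/
noncomputable def MPL (k : List ℕ) (z : ℝ) : ℝ :=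
  if h : 0 < k.length then
    ∑' n : {n : Fin k.length → ℕ // StrictAnti n ∧ ∀ i, 0 < n i},
      z ^ (n.1 ⟨0, h⟩) / ∏ i, (n.1 i : ℝ) ^ k.get i
  else 1

/-- Level-two multiple polylogarithm
`A(k;x) = 2^r Σ_{n₁>⋯>n_r>0, n_j ≡ r+1-j (mod 2)} x^{n₁}/(n₁^{k₁}⋯n_r^{k_r})`. -/
noncomputable def AFn (k : List ℕ) (x : ℝ) : ℝ :=
  if h : 0 < k.length then
    2 ^ k.length *
      ∑' n : {n : Fin k.length → ℕ //
          StrictAnti n ∧ (∀ i, 0 < n i) ∧ ∀ i, n i % 2 = (k.length - i.val) % 2},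
        x ^ (n.1 ⟨0, h⟩) / ∏ i, (n.1 i : ℝ) ^ k.get i
  else 1

/-- Multiple zeta value `ζ(k) = Σ_{n₁>⋯>n_r>0} ∏ 1/n_i^{k_i}`. -/
noncomputable def MZV (k : List ℕ) : ℝ :=
  ∑' n : {n : Fin k.length → ℕ // StrictAnti n ∧ ∀ i, 0 < n i},
    ∏ i, 1 / (n.1 i : ℝ) ^ k.get i

/-- Multiple zeta star value `ζ⋆(k) = Σ_{n₁≥⋯≥n_r>0} ∏ 1/n_i^{k_i}`. -/
noncomputable def MZSV (k : List ℕ) : ℝ :=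
  ∑' n : {n : Fin k.length → ℕ // Antitone n ∧ ∀ i, 0 < n i},
    ∏ i, 1 / (n.1 i : ℝ) ^ k.get i

/-- Multiple T-value `T(k) = 2^r Σ_{n₁>⋯>n_r>0, n_j ≡ r+1-j (mod 2)} ∏ 1/n_i^{k_i}`. -/
noncomputable def MTV (k : List ℕ) : ℝ :=
  2 ^ k.length *
    ∑' n : {n : Fin k.length → ℕ //
        StrictAnti n ∧ (∀ i, 0 < n i) ∧ ∀ i, n i % 2 = (k.length - i.val) % 2},
      ∏ i, 1 / (n.1 i : ℝ) ^ k.get i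

/-- Hurwitz-type multiple zeta value `ζ(k;α) = Σ_{n₁>⋯>n_r>0} ∏ (n_i+α-1)^{-k_i}`. -/
noncomputable def HMZV (k : List ℕ) (α : ℂ) : ℂ :=
  ∑' n : {n : Fin k.length → ℕ // StrictAnti n ∧ ∀ i, 0 < n i},
    ∏ i, ((n.1 i : ℂ) + α - 1) ^ (-(k.get i : ℤ))

/-- Hurwitz-type multiple zeta star value `ζ⋆(k;α) = Σ_{n₁≥⋯≥n_r>0} ∏ (n_i+α-1)^{-k_i}`. -/
noncomputable def HMZSV (k : List ℕ) (α : ℂ) : ℂ :=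
  ∑' n : {n : Fin k.length → ℕ // Antitone n ∧ ∀ i, 0 < n i},
    ∏ i, ((n.1 i : ℂ) + α - 1) ^ (-(k.get i : ℤ))

/-- Hurwitz-type multiple T-value
`T(k;α) = Σ_{m₁>⋯>m_r>0} 2^r ∏_i (2m_i - r - 2 + i + α)^{-k_i}` (1-indexed `i`). -/
noncomputable def HMTV (k : List ℕ) (α : ℂ) : ℂ :=
  ∑' n : {n : Fin k.length → ℕ // StrictAnti n ∧ ∀ i, 0 < n i},
    2 ^ k.length *
      ∏ i, (2 * (n.1 i : ℂ) - (k.length : ℂ) - 1 + (i.val : ℂ) + α) ^ (-(k.get i : ℤ))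

/-- The boolean word (sequence of bits between consecutive units) of a composition. -/
def toWord : List ℕ → List Bool
  | [] => []
  | [a] => List.replicate (a - 1) false
  | a :: b :: rest => List.replicate (a - 1) false ++ true :: toWord (b :: rest)

/-- The composition corresponding to a boolean word. -/
def fromWord : List Bool → List ℕ
  | [] => [1]
  | false :: w =>
    match fromWord w with
    | [] => [1]
    | a :: t => (a + 1) :: t
  | true :: w => 1 :: fromWord w

/-- Hoffman dual of a composition: swap commas and plus signs in
`k = (1+⋯+1, …, 1+⋯+1)`. -/
def HDual (k : List ℕ) : List ℕ := fromWord ((toWord k).map fun b => !b)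

/-- `k₊ = (k₁+1, k₂, …, k_r)`. -/
def plusOne : List ℕ → List ℕ
  | [] => []
  | a :: t => (a + 1) :: t

/-- `Refines l k` means the composition `k` can be obtained from `l`
by combining some consecutive parts of `l`, i.e. `l ⪰ k`. -/
inductive Refines : List ℕ → List ℕ → Prop
  | nil : Refines [] []
  | cons (b l k : List ℕ) : b ≠ [] → Refines l k → Refines (b ++ l) (b.sum :: k)

/-- Arakawa–Kaneko zeta function `ξ(s;k) = (1/Γ(s)) ∫_0^∞ t^{s-1}/(e^t-1) Li_k(1-e^{-t}) dt`. -/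
noncomputable def xiAK (s : ℂ) (k : List ℕ) : ℂ :=
  (1 / Complex.Gamma s) *
    ∫ t in Set.Ioi (0 : ℝ),
      (t : ℂ) ^ (s - 1) / ((Real.exp t : ℂ) - 1) * (MPL k (1 - Real.exp (-t)) : ℂ)

/-- Kaneko–Tsumura η-function `η(s;k) = (1/Γ(s)) ∫_0^∞ t^{s-1}/(1-e^t) Li_k(1-e^{t}) dt`. -/
noncomputable def etaKT (s : ℂ) (k : List ℕ) : ℂ :=
  (1 / Complex.Gamma s) *
    ∫ t in Set.Ioi (0 : ℝ),
      (t : ℂ) ^ (s - 1) / (1 - (Real.exp t : ℂ)) * (MPL k (1 - Real.exp t) : ℂ)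

/-- Kaneko–Tsumura ψ-function `ψ(s;k) = (1/Γ(s)) ∫_0^∞ t^{s-1} A(k; tanh(t/2))/sinh(t) dt`. -/
noncomputable def psiKT (s : ℂ) (k : List ℕ) : ℂ :=
  (1 / Complex.Gamma s) *
    ∫ t in Set.Ioi (0 : ℝ),
      (t : ℂ) ^ (s - 1) * ((AFn k (Real.tanh (t / 2)) / Real.sinh t : ℝ) : ℂ)

/-- Riemann zeta value `ζ(a) = Σ_{n>0} 1/n^a`. -/
noncomputable def zeta1 (a : ℕ) : ℝ := ∑' n : {n : ℕ // 0 < n}, 1 / (n.1 : ℝ) ^ a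

/-- Double zeta value `ζ(a,b) = Σ_{n₁>n₂>0} 1/(n₁^a n₂^b)`. -/
noncomputable def zeta2 (a b : ℕ) : ℝ :=
  ∑' p : {p : ℕ × ℕ // p.2 < p.1 ∧ 0 < p.2}, 1 / ((p.1.1 : ℝ) ^ a * (p.1.2 : ℝ) ^ b)

/-- Single T-value `T(a) = 2 Σ_{n>0 odd} 1/n^a`. -/
noncomputable def T1 (a : ℕ) : ℝ := 2 * ∑' n : {n : ℕ // 0 < n ∧ n % 2 = 1}, 1 / (n.1 : ℝ) ^ a

/-- Double T-value `T(a,b) = 4 Σ_{n₁>n₂>0, n₁ even, n₂ odd} 1/(n₁^a n₂^b)`. -/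
noncomputable def T2 (a b : ℕ) : ℝ :=
  4 * ∑' p : {p : ℕ × ℕ // p.2 < p.1 ∧ 0 < p.2 ∧ p.1 % 2 = 0 ∧ p.2 % 2 = 1},
    1 / ((p.1.1 : ℝ) ^ a * (p.1.2 : ℝ) ^ b)


open ENNReal

/-- Truncated nested sum, defined recursively. -/
noncomputable def nestP (w : ℕ → ℝ≥0∞) : List ℕ → ℕ → ℝ≥0∞
  | [], _ => 1
  | a :: l, N => ∑' n : ℕ, if 0 < n ∧ n < N then w n ^ a * nestP w l n else 0

lemma strictAnti_cons_iff {r : ℕ} (a : ℕ) (t : Fin r → ℕ) :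
    StrictAnti (Fin.cons a t : Fin (r+1) → ℕ) ↔ (∀ i, t i < a) ∧ StrictAnti t := by
  constructor
  · intro h
    refine ⟨fun i => ?_, fun i j hij => ?_⟩
    · have := h (Fin.succ_pos i)
      simpa using this
    · have := h (Fin.succ_lt_succ_iff.mpr hij)
      simpa using this
  · rintro ⟨h1, h2⟩ i j
    refine Fin.cases ?_ (fun i => ?_) i <;> refine Fin.cases ?_ (fun j => ?_) j
    · simp
    · intro _; simpa using h1 j
    · intro h; exact absurd h (by simp)
    · intro h; simpa using h2 (Fin.succ_lt_succ_iff.mp h)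

open Classical in
lemma nestP_eq (w : ℕ → ℝ≥0∞) (l : List ℕ) (N : ℕ) :
    (∑' n : Fin l.length → ℕ, if StrictAnti n ∧ (∀ i, 0 < n i) ∧ ∀ i, n i < N then
      ∏ i, w (n i) ^ l.get i else 0) = nestP w l N := by
  induction l generalizing N with
  | nil =>
    rw [tsum_eq_single (fun i => 0)]
    · rw [if_pos]
      · simp [nestP]
      · refine ⟨fun i => i.elim0, fun i => i.elim0, fun i => i.elim0⟩
    · intro b hb
      exact absurd (funext fun i => i.elim0) hb
  | cons a l ih =>
    rw [nestP]
    refine ((Fin.consEquiv (fun _ : Fin (l.length + 1) => ℕ)).tsum_eq _).symm.trans ?_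
    rw [ENNReal.tsum_prod']
    refine tsum_congr fun x => ?_
    rw [← ih]
    by_cases hx : 0 < x ∧ x < N
    · rw [if_pos hx, ← ENNReal.tsum_mul_left]
      refine tsum_congr fun t => ?_
      have : (StrictAnti (Fin.cons x t : Fin (l.length+1) → ℕ) ∧
          (∀ i, 0 < (Fin.cons x t : Fin (l.length+1) → ℕ) i) ∧
          ∀ i, (Fin.cons x t : Fin (l.length+1) → ℕ) i < N) ↔
          (StrictAnti t ∧ (∀ i, 0 < t i) ∧ ∀ i, t i < x) := by
        rw [strictAnti_cons_iff, Fin.forall_fin_succ, Fin.forall_fin_succ]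
        simp only [Fin.cons_zero, Fin.cons_succ]
        constructor
        · tauto
        · rintro ⟨h1, h2, h3⟩
          exact ⟨⟨h3, h1⟩, ⟨hx.1, h2⟩, hx.2, fun i => (h3 i).trans hx.2⟩
      simp only [Fin.consEquiv_apply, List.length_cons]
      rw [mul_ite, mul_zero]
      refine if_congr this ?_ rfl
      erw [Fin.prod_univ_succ]
      simp
    · rw [if_neg hx]
      refine ENNReal.tsum_eq_zero.mpr fun t => ?_
      rw [if_neg]
      rintro ⟨-, h1, h2⟩
      exact hx ⟨by simpa using h1 0, by simpa using h2 0⟩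

open Classical in
lemma nest_full (w g : ℕ → ℝ≥0∞) (a : ℕ) (l : List ℕ) :
    (∑' n : {n : Fin (a :: l).length → ℕ // StrictAnti n ∧ ∀ i, 0 < n i},
      g (n.1 ⟨0, Nat.succ_pos _⟩) * ∏ i, w (n.1 i) ^ (a :: l).get i) =
    ∑' n : ℕ, if 0 < n then g n * (w n ^ a * nestP w l n) else 0 := by
  have h0 := tsum_subtype {n : Fin (a :: l).length → ℕ | StrictAnti n ∧ ∀ i, 0 < n i}
    (fun n => g (n ⟨0, Nat.succ_pos _⟩) * ∏ i, w (n i) ^ (a :: l).get i)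
  refine h0.trans ?_
  refine ((Fin.consEquiv (fun _ : Fin (l.length + 1) => ℕ)).tsum_eq _).symm.trans ?_
  rw [ENNReal.tsum_prod']
  refine tsum_congr fun x => ?_
  rw [← nestP_eq]
  by_cases hx : 0 < x
  · rw [if_pos hx, ← ENNReal.tsum_mul_left, ← ENNReal.tsum_mul_left]
    refine tsum_congr fun t => ?_
    have : (StrictAnti (Fin.cons x t : Fin (l.length+1) → ℕ) ∧
        (∀ i, 0 < (Fin.cons x t : Fin (l.length+1) → ℕ) i)) ↔
        (StrictAnti t ∧ (∀ i, 0 < t i) ∧ ∀ i, t i < x) := by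
      rw [strictAnti_cons_iff, Fin.forall_fin_succ]
      simp only [Fin.cons_zero, Fin.cons_succ]
      tauto
    simp only [Fin.consEquiv_apply, List.length_cons, Set.indicator]
    rw [mul_ite, mul_zero, mul_ite, mul_zero]
    refine if_congr this ?_ rfl
    erw [Fin.prod_univ_succ]
    simp
  · rw [if_neg hx]
    refine ENNReal.tsum_eq_zero.mpr fun t => ?_
    rw [Set.indicator_of_notMem]
    rintro ⟨-, h1⟩
    exact hx (by simpa using h1 0)

lemma fromWord_ne (w : List Bool) : fromWord w ≠ [] := by
  cases w with
  | nil => simp [fromWord]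
  | cons b w =>
    cases b
    · rw [fromWord]; split <;> simp
    · simp [fromWord]

lemma fromWord_false (w : List Bool) : fromWord (false :: w) = plusOne (fromWord w) := by
  have := fromWord_ne w
  rw [fromWord]
  split
  · contradiction
  · rename_i h; rw [h, plusOne]

lemma fromWord_pos (w : List Bool) : ∀ a ∈ fromWord w, 0 < a := by
  induction w with
  | nil => simp [fromWord]
  | cons b w ih =>
    cases b
    · rw [fromWord_false]
      cases h : fromWord w with
      | nil => simp [plusOne]
      | cons a t =>
        rw [h] at ih
        simp only [plusOne, List.mem_cons, forall_eq_or_imp] at ih ⊢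
        exact ⟨by omega, ih.2⟩
    · simp [fromWord]; exact ih

lemma toWord_append (k : List ℕ) (hk : k ≠ []) (a : ℕ) :
    toWord (k ++ [a]) = toWord k ++ true :: List.replicate (a - 1) false := by
  induction k with
  | nil => contradiction
  | cons b k ih =>
    cases k with
    | nil => simp [toWord]
    | cons c k =>
      have := ih (by simp)
      simp only [List.cons_append] at this ⊢
      rw [toWord, this, toWord]
      simp

lemma toWord_reverse (k : List ℕ) : toWord k.reverse = (toWord k).reverse := by
  induction k with
  | nil => simp [toWord]
  | cons b k ih =>
    cases k with
    | nil => simp [toWord]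
    | cons c k =>
      rw [List.reverse_cons, toWord_append _ (by simp), ih]
      simp [toWord]

lemma tsum_if_lt (f : ℕ → ℝ≥0∞) (m : ℕ) :
    (∑' b, if m < b then f b else 0) = ∑' j, f (m + 1 + j) := by
  rw [← Summable.sum_add_tsum_nat_add' (f := fun b => if m < b then f b else 0) (k := m+1)
    ENNReal.summable, Finset.sum_eq_zero, zero_add]
  · refine tsum_congr fun j => ?_
    rw [if_pos (by omega), add_comm]
  · intro i hi
    rw [if_neg (by simp at hi; omega)]

section transport
variable (u v : ℕ → ℝ≥0∞) (D : ℕ → ℕ → ℝ≥0∞)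

/-- Connected sum. -/
noncomputable def connZ (a : ℕ) (k : List ℕ) (b : ℕ) (l : List ℕ) : ℝ≥0∞ :=
  ∑' n : ℕ, ∑' m : ℕ, if 0 < n ∧ 0 < m then
    u n ^ a * nestP u k n * D n m * (v m ^ b * nestP v l m) else 0

variable {u v D}
lemma conn_A (hA : ∀ n m, 0 < n → (∑' b, if m < b then D n b * v b else 0) = u n * D n m)
    (a : ℕ) (k : List ℕ) (b : ℕ) (l : List ℕ) :
    connZ u v D (a+1) k b l = connZ u v D a k 1 (b :: l) := by
  unfold connZ
  refine tsum_congr fun n => ?_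
  by_cases hn : 0 < n
  swap
  · simp [hn]
  simp only [hn, true_and]
  have h1 : ∀ m, (if 0 < m then u n ^ (a+1) * nestP u k n * D n m * (v m ^ b * nestP v l m) else 0)
     = ∑' c, (if 0 < m ∧ m < c then u n ^ a * nestP u k n * (v m ^ b * nestP v l m) * (D n c * v c) else 0) := by
    intro m
    by_cases hm : 0 < m
    · simp only [hm, true_and, if_true]
      have : ∀ c, (if m < c then u n ^ a * nestP u k n * (v m ^ b * nestP v l m) * (D n c * v c) else 0)
        = (u n ^ a * nestP u k n * (v m ^ b * nestP v l m)) * (if m < c then (D n c * v c) else 0) := by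
        intro c; simp
      simp_rw [this]
      rw [ENNReal.tsum_mul_left, hA n m hn]
      ring
    · simp [hm]
  simp_rw [h1]
  rw [ENNReal.tsum_comm]
  refine tsum_congr fun c => ?_
  by_cases hc : 0 < c
  · rw [if_pos hc, nestP, pow_one, ← ENNReal.tsum_mul_left, ← ENNReal.tsum_mul_left]
    refine tsum_congr fun m => ?_
    split_ifs <;> ring
  · rw [if_neg hc]
    refine ENNReal.tsum_eq_zero.mpr fun i => ?_
    rw [if_neg (by omega)]

lemma conn_B (hB : ∀ n m, 0 < m → (∑' a, if n < a then u a * D a m else 0) = D n m * v m)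
    (a : ℕ) (k : List ℕ) (b : ℕ) (l : List ℕ) :
    connZ u v D 1 (a :: k) b l = connZ u v D a k (b+1) l := by
  unfold connZ
  rw [ENNReal.tsum_comm]
  conv_rhs => rw [ENNReal.tsum_comm]
  refine tsum_congr fun m => ?_
  by_cases hm : 0 < m
  swap
  · simp [hm]
  simp only [hm, and_true]
  have h1 : ∀ n, (if 0 < n then u n ^ a * nestP u k n * D n m * (v m ^ (b+1) * nestP v l m) else 0)
     = ∑' c, (if 0 < n ∧ n < c then u n ^ a * nestP u k n * (v m ^ b * nestP v l m) * (u c * D c m) else 0) := by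
    intro n
    by_cases hn : 0 < n
    · simp only [hn, true_and, if_true]
      have : ∀ c, (if n < c then u n ^ a * nestP u k n * (v m ^ b * nestP v l m) * (u c * D c m) else 0)
        = (u n ^ a * nestP u k n * (v m ^ b * nestP v l m)) * (if n < c then (u c * D c m) else 0) := by
        intro c; simp
      simp_rw [this]
      rw [ENNReal.tsum_mul_left, hB n m hm]
      ring
    · simp [hn]
  simp_rw [h1]
  rw [ENNReal.tsum_comm]
  refine tsum_congr fun c => ?_
  by_cases hc : 0 < c
  · rw [if_pos hc, nestP, pow_one, ← ENNReal.tsum_mul_left, ← ENNReal.tsum_mul_right,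
      ← ENNReal.tsum_mul_right]
    refine tsum_congr fun m => ?_
    split_ifs <;> ring
  · rw [if_neg hc]
    symm
    refine ENNReal.tsum_eq_zero.mpr fun i => ?_
    rw [if_neg (by omega)]

/-- Full nested sum. -/
noncomputable def fullS (v : ℕ → ℝ≥0∞) : List ℕ → ℝ≥0∞
  | [] => 1
  | b :: l => ∑' n : ℕ, if 0 < n then v n ^ b * nestP v l n else 0

/-- Connected sum with list arguments. -/
noncomputable def connL (u v : ℕ → ℝ≥0∞) (D : ℕ → ℕ → ℝ≥0∞) : List ℕ → List ℕ → ℝ≥0∞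
  | a :: k, b :: l => connZ u v D a k b l
  | _, _ => 0

lemma conn_end (hB : ∀ n m, 0 < m → (∑' a, if n < a then u a * D a m else 0) = D n m * v m)
    (hD : ∀ m, 0 < m → D 0 m = 1) (b : ℕ) (l : List ℕ) :
    connZ u v D 1 [] b l = fullS v ((b+1) :: l) := by
  unfold connZ
  rw [ENNReal.tsum_comm, fullS]
  refine tsum_congr fun m => ?_
  by_cases hm : 0 < m
  swap
  · simp [hm]
  simp only [hm, and_true, if_true]
  have : ∀ n, (if 0 < n then u n ^ 1 * nestP u [] n * D n m * (v m ^ b * nestP v l m) else 0)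
    = (if 0 < n then u n * D n m else 0) * (v m ^ b * nestP v l m) := by
    intro n; simp [nestP]
  simp_rw [this]
  rw [ENNReal.tsum_mul_right, hB 0 m hm, hD m hm]
  ring

lemma conn_rep (hA : ∀ n m, 0 < n → (∑' b, if m < b then D n b * v b else 0) = u n * D n m)
    (a : ℕ) (k : List ℕ) (w : List Bool) (c : ℕ) :
    connL u v D ((a + c) :: k) (fromWord w) =
      connL u v D (a :: k) (fromWord (List.replicate c true ++ w)) := by
  induction c generalizing w with
  | zero => simp
  | succ c ih =>
    have h1 : connL u v D ((a + (c + 1)) :: k) (fromWord w) =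
        connL u v D ((a + c) :: k) (fromWord (true :: w)) := by
      rw [fromWord]
      cases h : fromWord w with
      | nil => exact absurd h (fromWord_ne w)
      | cons b l => simp only [connL, ← add_assoc]; exact conn_A hA _ _ _ _
    rw [h1, ih, List.replicate_succ']
    simp

lemma conn_main (hA : ∀ n m, 0 < n → (∑' b, if m < b then D n b * v b else 0) = u n * D n m)
    (hB : ∀ n m, 0 < m → (∑' a, if n < a then u a * D a m else 0) = D n m * v m)
    (hD : ∀ m, 0 < m → D 0 m = 1) (k : List ℕ) (hk : k ≠ []) (hpos : ∀ a ∈ k, 0 < a)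
    (w : List Bool) :
    connL u v D k (fromWord w) =
      fullS v (plusOne (fromWord (((toWord k).map fun b => !b).reverse ++ w))) := by
  induction k generalizing w with
  | nil => contradiction
  | cons a k ih =>
    have ha : a = 1 + (a - 1) := by have := hpos a (by simp); omega
    rw [ha, conn_rep hA, ← ha]
    cases k with
    | nil =>
      simp only [toWord, List.map_replicate, List.reverse_replicate, Bool.not_false]
      cases h : fromWord (List.replicate (a - 1) true ++ w) with
      | nil => exact absurd h (fromWord_ne _)
      | cons b l => simp only [connL, plusOne]; exact conn_end hB hD _ _
    | cons c k =>
      have h1 : connL u v D (1 :: c :: k) (fromWord (List.replicate (a - 1) true ++ w)) =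
        connL u v D (c :: k) (fromWord (false :: (List.replicate (a - 1) true ++ w))) := by
        rw [fromWord_false]
        cases h : fromWord (List.replicate (a - 1) true ++ w) with
        | nil => exact absurd h (fromWord_ne _)
        | cons b l => simp only [connL, plusOne]; exact conn_B hB _ _ _ _
      rw [h1, ih (by simp) (fun x hx => hpos x (List.mem_cons_of_mem _ hx))]
      simp [toWord]

end transport

noncomputable def uu (n : ℕ) : ℝ≥0∞ := ENNReal.ofReal (1 / (n : ℝ))
noncomputable def vv (σ : ℝ) (n : ℕ) : ℝ≥0∞ := ENNReal.ofReal (1 / ((n : ℝ) - σ))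
noncomputable def DD (σ : ℝ) (n m : ℕ) : ℝ≥0∞ :=
  ENNReal.ofReal (Real.Gamma (n + 1) * Real.Gamma (m + 1 - σ) / Real.Gamma (n + m + 1 - σ))

lemma lint_beta {p q : ℝ} (hp : 0 < p) (hq : 0 < q) :
    ∫⁻ x in Set.Ioo (0:ℝ) 1, ENNReal.ofReal (x ^ (p - 1) * (1 - x) ^ (q - 1)) =
      ENNReal.ofReal (ProbabilityTheory.beta p q) := by
  have h := ProbabilityTheory.lintegral_betaPDF_eq_one hp hq
  have hb := ProbabilityTheory.beta_pos hp hq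
  rw [ProbabilityTheory.lintegral_betaPDF] at h
  have h2 : ∀ x : ℝ, ENNReal.ofReal (1 / ProbabilityTheory.beta p q * x ^ (p - 1) * (1 - x) ^ (q - 1))
      = ENNReal.ofReal (1 / ProbabilityTheory.beta p q) * ENNReal.ofReal (x ^ (p - 1) * (1 - x) ^ (q - 1)) := by
    intro x
    rw [← ENNReal.ofReal_mul (by positivity), mul_assoc]
  simp_rw [h2] at h
  rw [lintegral_const_mul _ (by fun_prop)] at h
  have h3 : ENNReal.ofReal (ProbabilityTheory.beta p q) * ENNReal.ofReal (1 / ProbabilityTheory.beta p q) = 1 := by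
    rw [← ENNReal.ofReal_mul hb.le, mul_one_div_cancel hb.ne', ENNReal.ofReal_one]
  calc _ = ENNReal.ofReal (ProbabilityTheory.beta p q) * ENNReal.ofReal (1 / ProbabilityTheory.beta p q) *
      ∫⁻ x in Set.Ioo (0:ℝ) 1, ENNReal.ofReal (x ^ (p - 1) * (1 - x) ^ (q - 1)) := by rw [h3, one_mul]
    _ = _ := by rw [mul_assoc, h, mul_one]

lemma uD {σ : ℝ} (n m : ℕ) (hn : 0 < n) :
    uu n * DD σ n m = ENNReal.ofReal (ProbabilityTheory.beta n (m + 1 - σ)) := by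
  have hn' : (0:ℝ) < n := by exact_mod_cast hn
  rw [uu, DD, ← ENNReal.ofReal_mul (by positivity), ProbabilityTheory.beta, Real.Gamma_add_one hn'.ne']
  congr 1
  rw [show (n:ℝ) + (m + 1 - σ) = n + m + 1 - σ by ring]
  field_simp

lemma Dv {σ : ℝ} (hσ : σ < 1) (n m : ℕ) (hm : 0 < m) :
    DD σ n m * vv σ m = ENNReal.ofReal (ProbabilityTheory.beta (n + 1) (m - σ)) := by
  have hm' : (1:ℝ) ≤ m := by exact_mod_cast hm
  have h1 : (0:ℝ) < m - σ := by linarith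
  have h2 : (0:ℝ) ≤ 1 / (m - σ) := by positivity
  rw [vv, DD, ← ENNReal.ofReal_mul' h2, ProbabilityTheory.beta,
    show (m:ℝ) + 1 - σ = (m - σ) + 1 by ring, Real.Gamma_add_one h1.ne']
  congr 1
  rw [show (n:ℝ) + 1 + (m - σ) = n + m + 1 - σ by ring]
  field_simp

lemma geomE {y : ℝ} (h0 : 0 < y) (h1 : y < 1) (c : ℝ) (hc : 0 ≤ c) :
    ∑' j : ℕ, ENNReal.ofReal (c * y ^ j) = ENNReal.ofReal (c / (1 - y)) := by
  rw [← ENNReal.ofReal_tsum_of_nonneg (fun j => by positivity)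
    ((summable_geometric_of_lt_one h0.le h1).mul_left c), tsum_mul_left,
    tsum_geometric_of_lt_one h0.le h1, div_eq_mul_inv]

lemma hA_DD {σ : ℝ} (hσ : σ < 1) (n m : ℕ) (hn : 0 < n) :
    (∑' b, if m < b then DD σ n b * vv σ b else 0) = uu n * DD σ n m := by
  have hn' : (0:ℝ) < n := by exact_mod_cast hn
  rw [tsum_if_lt, uD n m hn, ← lint_beta hn' (by have := Nat.cast_nonneg (α := ℝ) m; linarith)]
  have h1 : ∀ j : ℕ, DD σ n (m + 1 + j) * vv σ (m + 1 + j) =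
    ∫⁻ x in Set.Ioo (0:ℝ) 1, ENNReal.ofReal (x ^ ((n:ℝ) + 1 - 1) * (1 - x) ^ (((m + 1 + j : ℕ) : ℝ) - σ - 1)) := by
    intro j
    rw [Dv hσ _ _ (by omega), lint_beta (by positivity)]
    push_cast
    have := Nat.cast_nonneg (α := ℝ) m
    have := Nat.cast_nonneg (α := ℝ) j
    linarith
  simp_rw [h1]
  rw [← lintegral_tsum (fun j => by fun_prop)]
  refine setLIntegral_congr_fun measurableSet_Ioo fun x hx => ?_
  have hx1 : 0 < 1 - x := by linarith [hx.2]
  have hx0 := hx.1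
  have h2 : ∀ j : ℕ, x ^ ((n:ℝ) + 1 - 1) * (1 - x) ^ (((m + 1 + j : ℕ) : ℝ) - σ - 1)
    = (x ^ (n:ℝ) * (1 - x) ^ ((m : ℝ) + 1 - σ - 1)) * (1 - x) ^ j := by
    intro j
    rw [mul_assoc, ← Real.rpow_natCast (1 - x) j, ← Real.rpow_add hx1]
    push_cast
    congr 2 <;> ring
  simp only [h2]
  rw [geomE hx1 (by linarith) _ (by positivity)]
  congr 1
  rw [Real.rpow_sub_one hx0.ne']
  rw [show 1 - (1 - x) = x by ring]; ring

lemma hB_DD {σ : ℝ} (hσ : σ < 1) (n m : ℕ) (hm : 0 < m) :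
    (∑' a, if n < a then uu a * DD σ a m else 0) = DD σ n m * vv σ m := by
  have hm' : (1:ℝ) ≤ m := by exact_mod_cast hm
  rw [tsum_if_lt, Dv hσ n m hm, ← lint_beta (by positivity) (by linarith)]
  have h1 : ∀ j : ℕ, uu (n + 1 + j) * DD σ (n + 1 + j) m =
    ∫⁻ x in Set.Ioo (0:ℝ) 1, ENNReal.ofReal (x ^ (((n + 1 + j : ℕ):ℝ) - 1) * (1 - x) ^ ((m:ℝ) + 1 - σ - 1)) := by
    intro j
    rw [uD _ _ (by omega), lint_beta (by positivity) (by linarith)]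
  simp_rw [h1]
  rw [← lintegral_tsum (fun j => by fun_prop)]
  refine setLIntegral_congr_fun measurableSet_Ioo fun x hx => ?_
  have hx1 : 0 < 1 - x := by linarith [hx.2]
  have hx0 := hx.1
  have h2 : ∀ j : ℕ, x ^ (((n + 1 + j : ℕ):ℝ) - 1) * (1 - x) ^ ((m:ℝ) + 1 - σ - 1)
    = (x ^ ((n:ℝ) + 1 - 1) * (1 - x) ^ ((m : ℝ) + 1 - σ - 1)) * x ^ j := by
    intro j
    rw [mul_right_comm, ← Real.rpow_natCast x j, ← Real.rpow_add hx0]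
    push_cast
    congr 2; ring
  simp only [h2]
  rw [geomE hx0 hx.2 _ (by positivity)]
  congr 1
  rw [Real.rpow_sub_one hx1.ne' ((m:ℝ) - σ), show (m:ℝ) + 1 - σ - 1 = m - σ by ring]
  ring

lemma hD_DD {σ : ℝ} (hσ : σ < 1) (m : ℕ) : DD σ 0 m = 1 := by
  have : 0 < Real.Gamma (m + 1 - σ) := by
    apply Real.Gamma_pos_of_pos
    have := Nat.cast_nonneg (α := ℝ) m; linarith
  rw [DD]
  simp [this.ne']

lemma vv_bound {σ : ℝ} (hσ : σ < 1) : ∃ c : ℝ, 0 < c ∧ ∀ n : ℕ, 0 < n → ∀ a j : ℕ, j ≤ a →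
    vv σ n ^ a ≤ ENNReal.ofReal (c ^ a / (n:ℝ) ^ j) := by
  have key : ∃ d : ℝ, 0 < d ∧ ∀ n : ℕ, 0 < n → d * n ≤ n - σ := by
    by_cases h : σ ≤ 0
    · exact ⟨1, one_pos, fun n _ => by linarith⟩
    · refine ⟨1 - σ, by linarith, fun n hn => ?_⟩
      have hn' : (1:ℝ) ≤ n := by exact_mod_cast hn
      nlinarith
  obtain ⟨d, hd, h⟩ := key
  refine ⟨1 / d, by positivity, fun n hn a j hj => ?_⟩
  have hn' : (1:ℝ) ≤ n := by exact_mod_cast hn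
  have h1 := h n hn
  have h2 : 0 < d * n := by positivity
  have h3 : 0 < (n:ℝ) - σ := by linarith
  rw [vv, ← ENNReal.ofReal_pow (by positivity)]
  apply ENNReal.ofReal_le_ofReal
  calc (1 / ((n:ℝ) - σ)) ^ a ≤ (1 / (d * n)) ^ a := by gcongr
    _ = (1 / d) ^ a / (n:ℝ) ^ a := by rw [← div_pow]; congr 1; field_simp
    _ ≤ _ := by gcongr

lemma nestP_bound {σ : ℝ} (hσ : σ < 1) (l : List ℕ) (hl : ∀ a ∈ l, 0 < a) (δ : ℝ) (hδ : 0 < δ) :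
    ∃ C : ℝ≥0∞, C ≠ ∞ ∧ ∀ m : ℕ, 0 < m → nestP (vv σ) l m ≤ C * ENNReal.ofReal ((m:ℝ) ^ δ) := by
  obtain ⟨c, hc, hcb⟩ := vv_bound hσ
  induction l generalizing δ with
  | nil =>
    refine ⟨1, by simp, fun m hm => ?_⟩
    have hm' : (1:ℝ) ≤ m := by exact_mod_cast hm
    rw [nestP, one_mul, ENNReal.one_le_ofReal]
    exact Real.one_le_rpow hm' hδ.le
  | cons a l ih =>
    obtain ⟨C, hC, h⟩ := ih (fun x hx => hl x (List.mem_cons_of_mem _ hx)) (δ/2) (by positivity)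
    have hS : Summable (fun n : ℕ => 1 / (n:ℝ) ^ (1 + δ/2)) :=
      Real.summable_one_div_nat_rpow.mpr (by linarith)
    refine ⟨C * ENNReal.ofReal (c ^ a) * ∑' n : ℕ, ENNReal.ofReal (1 / (n:ℝ) ^ (1 + δ/2)), ?_, ?_⟩
    · exact ENNReal.mul_ne_top (ENNReal.mul_ne_top hC ENNReal.ofReal_ne_top) hS.tsum_ofReal_ne_top
    · intro m hm
      rw [nestP, ← ENNReal.tsum_mul_left, ← ENNReal.tsum_mul_right]
      refine ENNReal.tsum_le_tsum fun n => ?_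
      split_ifs with hn
      swap
      · exact zero_le
      have hn' : (0:ℝ) < n := by exact_mod_cast hn.1
      have hnm : (n:ℝ) ≤ m := by exact_mod_cast hn.2.le
      calc vv σ n ^ a * nestP (vv σ) l n
          ≤ ENNReal.ofReal (c ^ a / (n:ℝ) ^ 1) * (C * ENNReal.ofReal ((n:ℝ) ^ (δ/2))) := by
            gcongr
            · exact hcb n hn.1 a 1 (hl a (by simp))
            · exact h n hn.1
        _ = C * (ENNReal.ofReal (c ^ a) * ENNReal.ofReal ((n:ℝ) ^ (δ/2) / n)) := by
            rw [mul_left_comm, ← ENNReal.ofReal_mul (by positivity), ← ENNReal.ofReal_mul (by positivity)]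
            congr 2; field_simp
        _ ≤ C * (ENNReal.ofReal (c ^ a) * ENNReal.ofReal (1 / (n:ℝ) ^ (1 + δ/2) * (m:ℝ) ^ δ)) := by
            gcongr
            calc (n:ℝ) ^ (δ/2) / n = 1 / (n:ℝ) ^ (1 + δ/2) * (n:ℝ) ^ δ := by
                  rw [one_div, ← Real.rpow_neg hn'.le, ← Real.rpow_add hn', ← Real.rpow_sub_one hn'.ne']
                  congr 1; ring
              _ ≤ _ := by gcongr
        _ = _ := by
            rw [ENNReal.ofReal_mul (p := 1 / (n:ℝ) ^ (1 + δ/2)) (by positivity)]; ring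

lemma fullS_finite {σ : ℝ} (hσ : σ < 1) (l : List ℕ) (hne : l ≠ []) (hl : ∀ a ∈ l, 0 < a) :
    fullS (vv σ) (plusOne l) ≠ ∞ := by
  obtain ⟨c, hc, hcb⟩ := vv_bound hσ
  cases l with
  | nil => contradiction
  | cons a l =>
    obtain ⟨C, hC, h⟩ := nestP_bound hσ l (fun x hx => hl x (List.mem_cons_of_mem _ hx)) (1/2) (by positivity)
    have hS : Summable (fun n : ℕ => 1 / (n:ℝ) ^ ((3:ℝ)/2)) :=
      Real.summable_one_div_nat_rpow.mpr (by norm_num)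
    rw [plusOne, fullS]
    have hfin : C * ENNReal.ofReal (c ^ (a+1)) * ∑' n : ℕ, ENNReal.ofReal (1 / (n:ℝ) ^ ((3:ℝ)/2)) ≠ ∞ :=
      ENNReal.mul_ne_top (ENNReal.mul_ne_top hC ENNReal.ofReal_ne_top) hS.tsum_ofReal_ne_top
    refine ne_top_of_le_ne_top hfin ?_
    rw [← ENNReal.tsum_mul_left]
    refine ENNReal.tsum_le_tsum fun n => ?_
    split_ifs with hn
    swap
    · exact zero_le
    have hn' : (0:ℝ) < n := by exact_mod_cast hn
    calc vv σ n ^ (a+1) * nestP (vv σ) l n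
        ≤ ENNReal.ofReal (c ^ (a+1) / (n:ℝ) ^ 2) * (C * ENNReal.ofReal ((n:ℝ) ^ ((1:ℝ)/2))) := by
          gcongr
          · exact hcb n hn (a+1) 2 (by have := hl a (by simp); omega)
          · exact h n hn
      _ = C * (ENNReal.ofReal (c ^ (a+1)) * ENNReal.ofReal ((n:ℝ) ^ ((1:ℝ)/2) / (n:ℝ)^2)) := by
          rw [mul_left_comm, ← ENNReal.ofReal_mul (by positivity), ← ENNReal.ofReal_mul (by positivity)]
          congr 2; field_simp
      _ = _ := by
          rw [mul_assoc]
          congr 3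
          rw [one_div ((n:ℝ)^ ((3:ℝ)/2)), ← Real.rpow_neg hn'.le, ← Real.rpow_natCast (n:ℝ) 2,
            ← Real.rpow_sub hn']
          norm_num

/-- The extended nonnegative multiple polylogarithm. -/
noncomputable def MM (a : ℕ) (l : List ℕ) (x : ℝ) : ℝ≥0∞ :=
  ∑' n : ℕ, if 0 < n then ENNReal.ofReal x ^ n * (uu n ^ a * nestP uu l n) else 0

lemma MM_meas (a : ℕ) (l : List ℕ) : Measurable (MM a l) := by
  unfold MM
  refine Measurable.tsum fun n => ?_
  split_ifs <;> fun_prop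

lemma lint_MM {σ : ℝ} (hσ : σ < 1) (a : ℕ) (l : List ℕ) (hpos : ∀ x ∈ a :: l, 0 < x) :
    ∫⁻ x in Set.Ioo (0:ℝ) 1, MM a l x * ENNReal.ofReal (1 / x) * ENNReal.ofReal ((1 - x) ^ (-σ)) =
      fullS (vv σ) (plusOne (HDual (a :: l).reverse)) := by
  have h := conn_main (hA_DD hσ) (hB_DD hσ) (fun m _ => hD_DD hσ m) (a :: l) (by simp) hpos []
  rw [HDual, toWord_reverse, List.map_reverse]
  rw [List.append_nil] at h
  rw [← h, fromWord, connL, connZ]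
  unfold MM
  simp_rw [← ENNReal.tsum_mul_right]
  rw [lintegral_tsum]
  swap
  · intro n
    split_ifs <;> fun_prop
  refine tsum_congr fun n => ?_
  by_cases hn : 0 < n
  swap
  · simp [hn]
  have hn' : (0:ℝ) < n := by exact_mod_cast hn
  simp only [hn, true_and, if_true]
  have e1 : ∫⁻ x in Set.Ioo (0:ℝ) 1, ENNReal.ofReal x ^ n * (uu n ^ a * nestP uu l n) *
      ENNReal.ofReal (1 / x) * ENNReal.ofReal ((1 - x) ^ (-σ)) =
      ∫⁻ x in Set.Ioo (0:ℝ) 1, (uu n ^ a * nestP uu l n) *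
        ENNReal.ofReal (x ^ ((n:ℝ) - 1) * (1 - x) ^ ((((0:ℕ):ℝ) + 1 - σ) - 1)) := by
    refine setLIntegral_congr_fun measurableSet_Ioo fun x hx => ?_
    have hx1 : 0 < 1 - x := by linarith [hx.2]
    have hx0 := hx.1
    rw [show ((((0:ℕ):ℝ) + 1 - σ) - 1) = -σ by push_cast; ring, ENNReal.ofReal_mul (by positivity),
      Real.rpow_sub_one hx0.ne', Real.rpow_natCast, div_eq_mul_one_div (x ^ n) x,
      ENNReal.ofReal_mul (by positivity), ENNReal.ofReal_pow hx0.le]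
    ring
  rw [e1, lintegral_const_mul _ (by fun_prop), lint_beta hn' (by push_cast; linarith),
    ← uD n 0 hn, ← hA_DD hσ n 0 hn, ← ENNReal.tsum_mul_left]
  refine tsum_congr fun m => ?_
  split_ifs <;> simp [nestP]
  ring

lemma MPL_eq (a : ℕ) (l : List ℕ) (x : ℝ) (hx : 0 ≤ x) :
    MPL (a :: l) x = (MM a l x).toReal := by
  have h := nest_full uu (fun n => ENNReal.ofReal x ^ n) a l
  rw [MM, ← h, ENNReal.tsum_toReal_eq, MPL, dif_pos (by simp)]
  · refine tsum_congr fun n => ?_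
    rw [ENNReal.toReal_mul, ENNReal.toReal_pow, ENNReal.toReal_ofReal hx, ENNReal.toReal_prod,
      div_eq_mul_inv, ← Finset.prod_inv_distrib]
    congr 1
    refine Finset.prod_congr rfl fun i _ => ?_
    rw [ENNReal.toReal_pow, uu, ENNReal.toReal_ofReal (by positivity)]
    simp
  · intro n
    refine ENNReal.mul_ne_top (by simp) (ENNReal.prod_ne_top fun i _ => ?_)
    exact ENNReal.pow_ne_top ENNReal.ofReal_ne_top

/-- The weight density. -/
noncomputable def dens (a : ℕ) (l : List ℕ) (x : ℝ) : ℝ≥0∞ := MM a l x * ENNReal.ofReal (1 / x)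

lemma dens_meas (a : ℕ) (l : List ℕ) : Measurable (dens a l) :=
  (MM_meas a l).mul (by fun_prop)

noncomputable def muM (a : ℕ) (l : List ℕ) : Measure ℝ :=
  (volume.restrict (Set.Ioo (0:ℝ) 1)).withDensity (dens a l)

noncomputable def XX (x : ℝ) : ℝ := - Real.log (1 - x)

lemma XX_meas : Measurable XX := by unfold XX; fun_prop

lemma lint_mu {σ : ℝ} (hσ : σ < 1) (a : ℕ) (l : List ℕ) (hpos : ∀ x ∈ a :: l, 0 < x) :
    ∫⁻ x, ENNReal.ofReal (Real.exp (σ * XX x)) ∂(muM a l) =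
      fullS (vv σ) (plusOne (HDual (a :: l).reverse)) := by
  have hm := XX_meas
  rw [← lint_MM hσ a l hpos, muM, lintegral_withDensity_eq_lintegral_mul _ (dens_meas a l) (by fun_prop)]
  refine setLIntegral_congr_fun measurableSet_Ioo fun x hx => ?_
  have hx1 : 0 < 1 - x := by linarith [hx.2]
  simp only [Pi.mul_apply, dens]
  rw [Real.rpow_def_of_pos hx1, XX]
  congr 3; ring

lemma dual_pos (k : List ℕ) : ∀ a ∈ HDual k, 0 < a := fromWord_pos _
lemma dual_ne (k : List ℕ) : HDual k ≠ [] := fromWord_ne _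

lemma integrable_mu {σ : ℝ} (hσ : σ < 1) (a : ℕ) (l : List ℕ) (hpos : ∀ x ∈ a :: l, 0 < x) :
    Integrable (fun x => Real.exp (σ * XX x)) (muM a l) := by
  have hm := XX_meas
  refine ⟨by fun_prop, ?_⟩
  rw [hasFiniteIntegral_iff_ofReal (by filter_upwards with x; positivity), lint_mu hσ a l hpos]
  exact (fullS_finite hσ _ (dual_ne _) (dual_pos _)).lt_top

lemma mgf_mu {σ : ℝ} (hσ : σ < 1) (a : ℕ) (l : List ℕ) (hpos : ∀ x ∈ a :: l, 0 < x) :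
    ProbabilityTheory.mgf XX (muM a l) σ =
      (fullS (vv σ) (plusOne (HDual (a :: l).reverse))).toReal := by
  have hm := XX_meas
  rw [ProbabilityTheory.mgf, integral_eq_lintegral_of_nonneg_ae (by filter_upwards with x; positivity)
    (by fun_prop), lint_mu hσ a l hpos]

lemma dens_fin (a : ℕ) (l : List ℕ) (hpos : ∀ x ∈ a :: l, 0 < x) :
    ∀ᵐ x ∂(volume.restrict (Set.Ioo (0:ℝ) 1)), dens a l x < ∞ := by
  refine ae_lt_top (dens_meas a l) ?_
  have h := lint_MM (σ := 0) (by norm_num) a l hpos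
  simp only [neg_zero, Real.rpow_zero, ENNReal.ofReal_one, mul_one] at h
  unfold dens
  rw [h]
  exact fullS_finite (by norm_num) _ (dual_ne _) (dual_pos _)

lemma mem_int {s : ℝ} (hs : s < 1) (a : ℕ) (l : List ℕ) (hpos : ∀ x ∈ a :: l, 0 < x) :
    s ∈ interior (ProbabilityTheory.integrableExpSet XX (muM a l)) := by
  have : Set.Iio (1:ℝ) ⊆ interior (ProbabilityTheory.integrableExpSet XX (muM a l)) :=
    interior_maximal (fun σ hσ => integrable_mu hσ a l hpos) isOpen_Iio
  exact this hs

section hurwitz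

lemma fullS_eq (v : ℕ → ℝ≥0∞) (L : List ℕ) (hL : L ≠ []) :
    fullS v L = ∑' n : {n : Fin L.length → ℕ // StrictAnti n ∧ ∀ i, 0 < n i},
      ∏ i, v (n.1 i) ^ L.get i := by
  cases L with
  | nil => contradiction
  | cons b t =>
    have h := nest_full v (fun _ => 1) b t
    simp only [one_mul] at h
    rw [fullS, h]

lemma vv_prod_ne_top (σ : ℝ) (L : List ℕ) (n : Fin L.length → ℕ) :
    ∏ i, vv σ (n i) ^ L.get i ≠ ∞ :=
  ENNReal.prod_ne_top fun i _ => ENNReal.pow_ne_top ENNReal.ofReal_ne_top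

lemma vv_prod_toReal {σ : ℝ} (hσ : σ < 1) (L : List ℕ) (n : Fin L.length → ℕ) (hn : ∀ i, 0 < n i) :
    (∏ i, vv σ (n i) ^ L.get i).toReal = ∏ i, ((n i : ℝ) - σ) ^ (-(L.get i : ℤ)) := by
  rw [ENNReal.toReal_prod]
  refine Finset.prod_congr rfl fun i _ => ?_
  have h1 : (1:ℝ) ≤ n i := by exact_mod_cast hn i
  have h2 : (0:ℝ) < n i - σ := by linarith
  rw [ENNReal.toReal_pow, vv, ENNReal.toReal_ofReal (by positivity)]
  simp

lemma hmzv_real {σ : ℝ} (hσ : σ < 1) (L : List ℕ) (hL : L ≠ []) :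
    HMZV L (1 - (σ : ℂ)) = ((fullS (vv σ) L).toReal : ℂ) := by
  have h0 := vv_prod_ne_top σ L
  rw [fullS_eq _ _ hL, ENNReal.tsum_toReal_eq (by intro n; exact h0 n.1), HMZV,
    Complex.ofReal_tsum]
  refine tsum_congr fun n => ?_
  rw [vv_prod_toReal hσ L n.1 n.2.2]
  push_cast
  refine Finset.prod_congr rfl fun i _ => ?_
  congr 1; ring

lemma hmzv_diff (L : List ℕ) (hL : L ≠ []) (hfin : ∀ σ : ℝ, σ < 1 → fullS (vv σ) L ≠ ∞) :
    DifferentiableOn ℂ (fun β : ℂ => HMZV L (1 - β)) {z | z.re < 1} := by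
  intro z hz
  obtain ⟨σ, hzσ, hσ⟩ := exists_between (show z.re < 1 from hz)
  have hopen : IsOpen {w : ℂ | w.re < σ} := isOpen_lt Complex.continuous_re continuous_const
  have hne : ∀ w : ℂ, w.re < 1 → ∀ n : ℕ, 0 < n → (n : ℂ) + (1 - w) - 1 ≠ 0 := by
    intro w hw n hn h
    have := congrArg Complex.re h
    have h1 : (1:ℝ) ≤ n := by exact_mod_cast hn
    simp at this
    linarith
  have key : DifferentiableOn ℂ (fun β : ℂ => HMZV L (1 - β)) {w : ℂ | w.re < σ} := by
    unfold HMZV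
    have hs := hfin σ hσ
    rw [fullS_eq _ _ hL] at hs
    refine Complex.differentiableOn_tsum_of_summable_norm (ENNReal.summable_toReal hs) ?_ hopen ?_
    · intro n w hw
      apply DifferentiableAt.differentiableWithinAt
      refine DifferentiableAt.fun_finsetProd fun i _ => ?_
      refine DifferentiableAt.zpow (by fun_prop) (Or.inl (hne w (lt_trans hw hσ) _ (n.2.2 i)))
    · intro n w hw
      rw [vv_prod_toReal hσ L n.1 n.2.2, norm_prod]
      refine Finset.prod_le_prod (fun i _ => norm_nonneg _) fun i _ => ?_
      have h1 : (1:ℝ) ≤ n.1 i := by exact_mod_cast n.2.2 i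
      have h2 : (0:ℝ) < n.1 i - σ := by linarith
      have h3 : (n.1 i : ℝ) - σ ≤ ‖(n.1 i : ℂ) + (1 - w) - 1‖ := by
        refine le_trans ?_ (Complex.re_le_norm _)
        have : w.re < σ := hw
        simp
        linarith
      rw [norm_zpow, zpow_neg, zpow_neg, zpow_natCast, zpow_natCast]
      gcongr
  exact ((key z hzσ).differentiableAt (hopen.mem_nhds hzσ)).differentiableWithinAt

end hurwitz

lemma mgf_eq_hmzv (a : ℕ) (l : List ℕ) (hpos : ∀ x ∈ a :: l, 0 < x) :
    Set.EqOn (ProbabilityTheory.complexMGF XX (muM a l))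
      (fun β : ℂ => HMZV (plusOne (HDual (a :: l).reverse)) (1 - β)) {z | z.re < 1} := by
  have hLne : plusOne (HDual (a :: l).reverse) ≠ [] := by
    cases h : HDual (a :: l).reverse with
    | nil => exact absurd h (dual_ne _)
    | cons b t => simp [plusOne]
  have hopen : IsOpen {w : ℂ | w.re < 1} := isOpen_lt Complex.continuous_re continuous_const
  have hconv : Convex ℝ {w : ℂ | w.re < 1} := convex_halfSpace_re_lt 1
  have h1 : AnalyticOnNhd ℂ (ProbabilityTheory.complexMGF XX (muM a l)) {z | z.re < 1} :=
    ProbabilityTheory.analyticOnNhd_complexMGF.mono fun z hz => mem_int hz a l hpos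
  have h2 : AnalyticOnNhd ℂ (fun β : ℂ => HMZV (plusOne (HDual (a :: l).reverse)) (1 - β)) {z | z.re < 1} :=
    (hmzv_diff _ hLne fun σ hσ => fullS_finite hσ _ (dual_ne _) (dual_pos _)).analyticOnNhd hopen
  refine h1.eqOn_of_preconnected_of_frequently_eq h2 hconv.isPreconnected (z₀ := 0) (by simp) ?_
  have ht : Filter.Tendsto (fun r : ℝ => (r : ℂ)) (nhdsWithin 0 {0}ᶜ) (nhdsWithin 0 {0}ᶜ) := by
    refine tendsto_nhdsWithin_of_tendsto_nhds_of_eventually_within _ ?_ ?_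
    · have : Filter.Tendsto (fun r : ℝ => (r : ℂ)) (nhds 0) (nhds ((0:ℝ):ℂ)) :=
        Complex.continuous_ofReal.tendsto 0
      simpa using this.mono_left nhdsWithin_le_nhds
    · filter_upwards [self_mem_nhdsWithin] with r hr
      simpa using hr
  refine ht.frequently (Filter.Eventually.frequently ?_)
  have hev : ∀ᶠ r : ℝ in nhdsWithin 0 {0}ᶜ, r < 1 :=
    nhdsWithin_le_nhds (Iio_mem_nhds (by norm_num))
  filter_upwards [hev] with σ hσ
  rw [ProbabilityTheory.complexMGF_ofReal, mgf_mu hσ a l hpos, hmzv_real hσ _ hLne]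

theorem stmt4 (k : List ℕ) (hk : k ≠ []) (hkpos : ∀ a ∈ k, 0 < a)
    (m : ℕ) (hm : 0 < m) (α : ℂ) (hα : ∀ j : ℕ, 0 < j → α ≠ (j : ℂ)) (hre : α.re < 1) :
    (∫ x in (0:ℝ)..1,
        ((MPL k x * Real.log (1 - x) ^ m : ℝ) : ℂ) /
          ((x : ℂ) * ((1 : ℂ) - (x : ℂ)) ^ α)) =
      (-1) ^ m *
        iteratedDeriv m (fun β : ℂ => HMZV (plusOne (HDual k.reverse)) (1 - β)) α := by
  cases k with
  | nil => contradiction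
  | cons a l =>
    have hopen : IsOpen {w : ℂ | w.re < 1} := isOpen_lt Complex.continuous_re continuous_const
    have hev := (mgf_eq_hmzv a l hkpos).eventuallyEq_of_mem (hopen.mem_nhds hre)
    rw [← hev.iteratedDeriv_eq m, ProbabilityTheory.iteratedDeriv_complexMGF (mem_int hre a l hkpos),
      muM, integral_withDensity_eq_integral_toReal_smul (dens_meas a l) (dens_fin a l hkpos),
      intervalIntegral.integral_of_le zero_le_one, integral_Ioc_eq_integral_Ioo, ← integral_const_mul]
    refine setIntegral_congr_fun measurableSet_Ioo fun x hx => ?_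
    have hx1 : 0 < 1 - x := by linarith [hx.2]
    have hx0 := hx.1
    have hne : ((1:ℂ) - (x:ℂ)) ≠ 0 := by exact_mod_cast hx1.ne'
    rw [MPL_eq a l x hx0.le, dens, ENNReal.toReal_mul, ENNReal.toReal_ofReal (by positivity),
      Complex.cpow_def_of_ne_zero hne, show (1:ℂ) - (x:ℂ) = ((1 - x : ℝ) : ℂ) by push_cast; rfl,
      ← Complex.ofReal_log hx1.le, XX, Complex.real_smul,
      show α * ((-Real.log (1 - x) : ℝ) : ℂ) = -(((Real.log (1 - x) : ℝ) : ℂ) * α) by push_cast; ring,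
      Complex.exp_neg]
    have hm1 : ((-1 : ℂ)) ^ m * (-1) ^ m = 1 := by rw [← mul_pow]; norm_num
    push_cast
    rw [neg_pow ((Real.log (1 - x) : ℝ) : ℂ) m]
    have hxc : (x:ℂ) ≠ 0 := by exact_mod_cast hx0.ne'
    have he := Complex.exp_ne_zero (((Real.log (1 - x) : ℝ) : ℂ) * α)
    field_simp
    linear_combination (-((MM a l x).toReal : ℂ) * ((Real.log (1 - x) : ℝ) : ℂ) ^ m) * hm1
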